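/- Let 𝔽 be a field of characteristic zero and let 𝒜 = M_{n_1}(𝔽) ⊕ ⋯ ⊕ M_{n_k}(𝔽). If Φ : 𝒜 → 𝒜 is an additive surjection that maps singular elements to singular elements, then for every index i ∈ {1,…,k} there exists an index j ∈ {1,…,k} such that Φ maps the i-th block M_{n_i}(𝔽) onto the j-th block M_{n_j}(𝔽). -/

import Mathlib

/-- The block-diagonal matrix algebra `M_{n 0}(𝔽) ⊕ ⋯ ⊕ M_{n (k-1)}(𝔽)`. -/
abbrev BlockAlg (𝔽 : Type*) [Field 𝔽] (k : ℕ) (n : Fin k → ℕ) :=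
  ∀ i : Fin k, Matrix (Fin (n i)) (Fin (n i)) 𝔽

/-- The `i`-th block: elements whose components other than the `i`-th vanish. -/
def blockSet {𝔽 : Type*} [Field 𝔽] {k : ℕ} {n : Fin k → ℕ} (i : Fin k) :
    Set (BlockAlg 𝔽 k n) :=
  {a | ∀ j, j ≠ i → a j = 0}

open MvPolynomial in
/-- A polynomial vanishing at natural points with `t s = 0` only has monomials involving `s`. -/
theorem aux_support {F σ : Type*} [Field F] [CharZero F] [Fintype σ] [DecidableEq σ]
    (p : MvPolynomial σ F) (s : σ)
    (h : ∀ t : σ → ℕ, t s = 0 → eval (fun x => (t x : F)) p = 0) :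
    ∀ m ∈ p.support, m s ≠ 0 := by
  classical
  intro m hm hms
  let q : MvPolynomial σ F := ∑ d ∈ p.support with d s = 0, monomial d (coeff d p)
  have hq : q = 0 := by
    apply MvPolynomial.funext_set (fun _ => Set.range (fun k : ℕ => (k : F)))
    · intro _
      exact Set.infinite_range_of_injective Nat.cast_injective
    · intro x hx
      have hx' : ∀ i, ∃ k : ℕ, (k : F) = x i := fun i => hx i (Set.mem_univ i)
      choose t ht using hx'
      have h1 := h (Function.update t s 0) (by simp)
      rw [eval_eq] at h1
      simp only [q, map_sum, map_zero]
      rw [Finset.sum_filter]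
      refine Eq.trans ?_ h1
      refine Finset.sum_congr rfl fun d _ => ?_
      split_ifs with hd
      · rw [eval_monomial]
        congr 1
        rw [Finsupp.prod]
        refine Finset.prod_congr rfl fun i hi => ?_
        have : i ≠ s := by
          rintro rfl
          simp [hd] at hi
        simp [Function.update_of_ne this, ht]
      · symm
        refine mul_eq_zero_of_right (coeff d p) ?_
        apply Finset.prod_eq_zero (Finsupp.mem_support_iff.mpr hd)
        simp [hd]
  have hc : coeff m q = coeff m p := by
    simp only [q, coeff_sum, coeff_monomial]
    rw [Finset.sum_ite_eq']
    simp [hms]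
    tauto
  rw [hq] at hc
  simp at hc
  exact (MvPolynomial.mem_support_iff.mp hm) hc.symm

open MvPolynomial in
theorem aux_homog {F σ : Type*} [Field F] [Fintype σ] {d : ℕ}
    (A : σ → Matrix (Fin d) (Fin d) F) :
    (Matrix.det (Matrix.of fun r c => ∑ s, C (A s r c) * X s) : MvPolynomial σ F).IsHomogeneous d := by
  rw [Matrix.det_apply]
  refine IsHomogeneous.sum _ _ _ fun g _ => ?_
  have h : (∏ i, (Matrix.of fun r c => ∑ s, C (A s r c) * X s) (g i) i :
      MvPolynomial σ F).IsHomogeneous d := by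
    have := IsHomogeneous.prod Finset.univ
      (fun i => ((Matrix.of fun r c => ∑ s, C (A s r c) * X s) (g i) i : MvPolynomial σ F))
      (fun _ => 1) (fun i _ => IsHomogeneous.sum _ _ _ fun s _ => isHomogeneous_C_mul_X _ _)
    simpa using this
  rcases Int.units_eq_one_or (Equiv.Perm.sign g) with h' | h' <;> rw [h']
  · simpa using h
  · simpa using h.neg

open MvPolynomial in
/-- Determinant of a pencil that vanishes when one of the parameters in `S` vanishes. -/
theorem aux_pencil {F σ : Type*} [Field F] [CharZero F] [Fintype σ] [DecidableEq σ] {d : ℕ}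
    (A : σ → Matrix (Fin d) (Fin d) F) (S : Finset σ)
    (h : ∀ s ∈ S, ∀ t : σ → ℕ, t s = 0 → (∑ x, t x • A x).det = 0) :
    ((∑ x, A x).det ≠ 0 → S.card ≤ d) ∧
    (S.card = d → ∀ t : σ → ℕ, (∑ x, t x • A x).det = (∑ x, A x).det * ∏ s ∈ S, (t s : F)) := by
  set p : MvPolynomial σ F := Matrix.det (Matrix.of fun r c => ∑ s, C (A s r c) * X s) with hp
  have hom : p.IsHomogeneous d := aux_homog A
  have hev : ∀ t : σ → ℕ, eval (fun x => (t x : F)) p = (∑ x, t x • A x).det := by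
    intro t
    rw [hp, RingHom.map_det]
    congr 1
    ext r c
    simp only [RingHom.mapMatrix_apply, Matrix.map_apply, Matrix.of_apply, map_sum, map_mul, eval_C, eval_X,
      Matrix.sum_apply]
    refine Finset.sum_congr rfl fun s _ => ?_
    rw [Matrix.smul_apply, nsmul_eq_mul, mul_comm]
  have hev1 : eval (fun _ => (1 : F)) p = (∑ x, A x).det := by
    have := hev (fun _ => 1)
    simpa using this
  have hsupp : ∀ m ∈ p.support, ∀ s ∈ S, m s ≠ 0 := fun m hm s hs =>
    aux_support p s (fun t ht => by rw [hev]; exact h s hs t ht) m hm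
  have hdeg : ∀ m ∈ p.support, ∑ s, m s = d := by
    intro m hm
    have := hom.degree_eq_sum_deg_support hm
    rw [this]
    exact (Finset.sum_subset (Finset.subset_univ _) (by simp)).symm
  have hle : ∀ m ∈ p.support, S.card ≤ ∑ s ∈ S, m s := by
    intro m hm
    rw [Finset.card_eq_sum_ones]
    exact Finset.sum_le_sum fun s hs => Nat.one_le_iff_ne_zero.mpr (hsupp m hm s hs)
  have hle2 : ∀ m : σ →₀ ℕ, ∑ s ∈ S, m s ≤ ∑ s, m s := fun m =>
    Finset.sum_le_sum_of_subset (Finset.subset_univ S)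
  constructor
  · intro hne
    have hp0 : p ≠ 0 := by
      intro h0
      rw [← hev1, h0] at hne
      simp at hne
    obtain ⟨m, hm⟩ := MvPolynomial.support_nonempty.mpr hp0
    have := hle m hm
    have := hle2 m
    have := hdeg m hm
    omega
  · intro hcard t
    have key : ∀ m ∈ p.support, ∀ s, m s = if s ∈ S then 1 else 0 := by
      intro m hm s
      have h1 := hle m hm
      have h2 := hle2 m
      have h3 := hdeg m hm
      have h4 := Finset.sum_add_sum_compl S (fun s => m s)
      split_ifs with hs
      · have h5 : ∑ s ∈ S, 1 = ∑ s ∈ S, m s := by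
          rw [← Finset.card_eq_sum_ones]; omega
        exact ((Finset.sum_eq_sum_iff_of_le (fun s hs =>
          Nat.one_le_iff_ne_zero.mpr (hsupp m hm s hs))).mp h5 s hs).symm
      · have h6 : ∑ s ∈ Sᶜ, m s = 0 := by omega
        exact (Finset.sum_eq_zero_iff.mp h6) s (by simpa using hs)
    rw [← hev, ← hev1, eval_eq', eval_eq', Finset.sum_mul]
    refine Finset.sum_congr rfl fun m hm => ?_
    simp only [key m hm]
    simp [Finset.prod_ite_mem]

/-- If adding `M` never changes determinants then `M = 0`. -/
theorem aux_zero {F : Type*} [Field F] {d : ℕ} (M : Matrix (Fin d) (Fin d) F)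
    (h : ∀ Z, (Z + M).det = Z.det) : M = 0 := by
  by_contra hM
  obtain ⟨x, hx⟩ : ∃ x, M.mulVec x ≠ 0 := by
    by_contra! hc
    exact hM (Matrix.ext_of_mulVec_single fun i => by rw [hc, Matrix.zero_mulVec])
  have hx0 : x ≠ 0 := by
    rintro rfl
    simp at hx
  let f := (LinearEquiv.toSpanNonzeroSingleton F _ x hx0).symm ≪≫ₗ
    LinearEquiv.toSpanNonzeroSingleton F _ _ hx
  obtain ⟨g, hg⟩ := Submodule.exists_linearEquiv_restrict_eq f
  have hgx : g x = M.mulVec x := by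
    have := hg ⟨x, Submodule.mem_span_singleton_self x⟩
    simp only at this
    rw [← this]
    have h1 : (LinearEquiv.toSpanNonzeroSingleton F _ x hx0).symm
        ⟨x, Submodule.mem_span_singleton_self x⟩ = 1 := by
      rw [LinearEquiv.symm_apply_eq]
      ext; simp
    simp [f, h1]
  let N := LinearMap.toMatrix' (g : (Fin d → F) →ₗ[F] (Fin d → F))
  have hN : N.det ≠ 0 := by
    rw [LinearMap.det_toMatrix']
    exact (LinearEquiv.isUnit_det' g).ne_zero
  have h0 : (N - M).det = 0 := by
    rw [← Matrix.exists_mulVec_eq_zero_iff]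
    refine ⟨x, hx0, ?_⟩
    rw [Matrix.sub_mulVec, LinearMap.toMatrix'_mulVec]
    simp [hgx]
  have := h (N - M)
  rw [sub_add_cancel, h0] at this
  exact hN this

open Polynomial in
theorem aux_fin {F : Type*} [Field F] [CharZero F] {d : ℕ} (A B : Matrix (Fin d) (Fin d) F)
    (h : A.det ≠ 0 ∨ B.det ≠ 0) : {m : ℕ | (m • A + B).det = 0}.Finite := by
  classical
  set p : F[X] := Matrix.det ((X : F[X]) • A.map C + B.map C) with hp
  have hev : ∀ m : F, p.eval m = (m • A + B).det := by
    intro m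
    rw [hp, ← Polynomial.coe_evalRingHom, RingHom.map_det]
    congr 1
    ext r c
    simp
    ring
  have hp0 : p ≠ 0 := by
    intro h0
    rcases h with h | h
    · apply h
      rw [← Polynomial.coeff_det_X_add_C_card A B, ← hp, h0, Polynomial.coeff_zero]
    · apply h
      have := hev 0
      simpa [h0] using this.symm
  have := (p.roots.toFinset.finite_toSet).preimage (f := fun m : ℕ => (m : F))
    (Nat.cast_injective.injOn)
  refine this.subset fun m hm => ?_
  have h2 : ((m : F) • A + B).det = 0 := by
    rw [Nat.cast_smul_eq_nsmul]; exact hm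
  simp [hp0, hev, h2]

/-- Diagonal matrix unit indexed by a block and a position in it. -/
def diagE (𝔽 : Type*) [Field 𝔽] {k : ℕ} {n : Fin k → ℕ} (s : Σ i : Fin k, Fin (n i)) :
    BlockAlg 𝔽 k n :=
  fun i => Matrix.diagonal fun a => if (⟨i, a⟩ : Σ i : Fin k, Fin (n i)) = s then 1 else 0

section
variable {𝔽 : Type*} [Field 𝔽] {k : ℕ} {n : Fin k → ℕ}

theorem diagE_ne_zero (s : Σ i : Fin k, Fin (n i)) : diagE 𝔽 s ≠ 0 := by
  intro h
  have := congrFun (congrFun (congrFun h s.1) s.2) s.2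
  simp [diagE] at this

theorem diagE_mul_self (s : Σ i : Fin k, Fin (n i)) : diagE 𝔽 s * diagE 𝔽 s = diagE 𝔽 s := by
  funext i
  simp only [diagE, Pi.mul_apply, Matrix.diagonal_mul_diagonal]
  congr 1
  funext a
  split_ifs <;> simp

theorem diagE_mul_of_ne {s t : Σ i : Fin k, Fin (n i)} (h : s ≠ t) :
    diagE 𝔽 s * diagE 𝔽 t = 0 := by
  funext i
  simp only [diagE, Pi.mul_apply, Matrix.diagonal_mul_diagonal, Pi.zero_apply]
  rw [← Matrix.diagonal_zero]
  congr 1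
  funext a
  split_ifs with h1 h2
  · exact absurd (h1.symm.trans h2) h
  all_goals simp

theorem sum_diagE : ∑ s, diagE 𝔽 (n := n) s = 1 := by
  funext i
  rw [Finset.sum_apply]
  ext a b
  rw [Matrix.sum_apply]
  simp only [diagE, Matrix.diagonal_apply, Pi.one_apply, Matrix.one_apply]
  split_ifs with h
  · simp
  · simp

theorem isUnit_iff_det (X : BlockAlg 𝔽 k n) : IsUnit X ↔ ∀ j, (X j).det ≠ 0 := by
  rw [Pi.isUnit_iff]
  simp [Matrix.isUnit_iff_isUnit_det]

theorem exists_generic [CharZero 𝔽] (G : AddSubmonoid (BlockAlg 𝔽 k n))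
    (h : ∀ j, ∃ X ∈ G, (X j).det ≠ 0) (T : Finset (Fin k)) :
    ∃ X ∈ G, ∀ j ∈ T, (X j).det ≠ 0 := by
  induction T using Finset.induction_on with
  | empty => exact ⟨0, G.zero_mem, by simp⟩
  | insert j T _ ih =>
    obtain ⟨X, hX, hXT⟩ := ih
    obtain ⟨Y, hY, hYj⟩ := h j
    have hfin : (⋃ l ∈ insert j T, {m : ℕ | (m • Y l + X l).det = 0}).Finite := by
      refine Set.Finite.biUnion (Finset.finite_toSet _) fun l hl => ?_
      apply aux_fin
      rcases Finset.mem_insert.mp hl with rfl | hl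
      · exact Or.inl hYj
      · exact Or.inr (hXT l hl)
    obtain ⟨m, hm⟩ := hfin.exists_notMem
    refine ⟨m • Y + X, G.add_mem (G.nsmul_mem hY m) hX, fun l hl h0 => hm ?_⟩
    exact Set.mem_biUnion (x := l) hl h0

theorem columns [CharZero 𝔽] (Φ : BlockAlg 𝔽 k n →+ BlockAlg 𝔽 k n)
    (hsurj : Function.Surjective Φ)
    (hsing : ∀ a, ¬ IsUnit a → ¬ IsUnit (Φ a)) :
    ∃ J : (Σ i : Fin k, Fin (n i)) → Fin k,
      (∀ s V j, j ≠ J s → Φ (V * diagE 𝔽 s) j = 0) ∧ (∀ s, ∃ V, Φ (V * diagE 𝔽 s) (J s) ≠ 0) := by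
  classical
  have step1 : ∀ s : Σ i : Fin k, Fin (n i), ∃ j, ∀ X, X * diagE 𝔽 s = 0 → (Φ X j).det = 0 := by
    intro s
    by_contra! hc
    let G : AddSubmonoid (BlockAlg 𝔽 k n) :=
      { carrier := {Z | ∃ X, X * diagE 𝔽 s = 0 ∧ Φ X = Z}
        zero_mem' := ⟨0, by simp⟩
        add_mem' := by
          rintro _ _ ⟨X, hX, rfl⟩ ⟨Y, hY, rfl⟩
          exact ⟨X + Y, by rw [add_mul, hX, hY, add_zero], map_add _ _ _⟩ }
    obtain ⟨_, ⟨X, hX, rfl⟩, hX2⟩ := exists_generic G (fun j => by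
      obtain ⟨X, hX, hX2⟩ := hc j
      exact ⟨Φ X, ⟨X, hX, rfl⟩, hX2⟩) Finset.univ
    refine hsing X (fun hu => diagE_ne_zero s (hu.mul_right_eq_zero.mp hX)) ?_
    rw [isUnit_iff_det]
    exact fun j => hX2 j (Finset.mem_univ j)
  choose J hJ using step1
  let S : Fin k → Finset (Σ i : Fin k, Fin (n i)) := fun j => Finset.univ.filter fun s => J s = j
  have hD : ∀ (U : BlockAlg 𝔽 k n) (t : (Σ i : Fin k, Fin (n i)) → ℕ) (j : Fin k),
      ∑ x, t x • Φ (U * diagE 𝔽 x) j = Φ (U * ∑ x, t x • diagE 𝔽 x) j := by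
    intro U t j
    rw [Finset.mul_sum, map_sum, Finset.sum_apply]
    refine Finset.sum_congr rfl fun x _ => ?_
    rw [mul_smul_comm, map_nsmul, Pi.smul_apply]
  have hD1 : ∀ (U : BlockAlg 𝔽 k n) (j : Fin k), ∑ x, Φ (U * diagE 𝔽 x) j = Φ U j := by
    intro U j
    have := hD U (fun _ => 1) j
    simpa [sum_diagE] using this
  have hDE : ∀ (t : (Σ i : Fin k, Fin (n i)) → ℕ) (s : Σ i : Fin k, Fin (n i)), t s = 0 →
      (∑ x, t x • diagE 𝔽 x) * diagE 𝔽 s = 0 ∧ diagE 𝔽 s * (∑ x, t x • diagE 𝔽 x) = 0 := by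
    intro t s hts
    rw [Finset.mul_sum, Finset.sum_mul]
    constructor <;> refine Finset.sum_eq_zero fun x _ => ?_
    · by_cases hx : x = s
      · subst hx; simp [hts]
      · rw [smul_mul_assoc, diagE_mul_of_ne hx, smul_zero]
    · by_cases hx : x = s
      · subst hx; simp [hts]
      · rw [mul_smul_comm, diagE_mul_of_ne (Ne.symm hx), smul_zero]
  have hpen := fun (U : BlockAlg 𝔽 k n) (j : Fin k) =>
    aux_pencil (fun x => Φ (U * diagE 𝔽 x) j) (S j) (by
      intro s hs t hts
      have hs' : J s = j := by simpa [S] using hs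
      subst hs'
      rw [hD]
      apply hJ
      rw [mul_assoc, (hDE t s hts).1, mul_zero])
  obtain ⟨U₀, hU₀⟩ := hsurj 1
  have hle : ∀ j, (S j).card ≤ n j := by
    intro j
    apply (hpen U₀ j).1
    rw [hD1, hU₀]
    simp
  have hcard : ∀ j, (S j).card = n j := by
    have hsum : ∑ j, (S j).card = ∑ j, n j := by
      rw [← Finset.card_eq_sum_card_fiberwise (f := J) (s := Finset.univ) (t := Finset.univ)
        (by simp [Set.MapsTo])]
      simp
    intro j
    exact (Finset.sum_eq_sum_iff_of_le (fun j _ => hle j)).mp hsum j (Finset.mem_univ j)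
  refine ⟨J, ?_, ?_⟩
  · intro s V j hj
    apply aux_zero
    intro Z
    obtain ⟨U, hU⟩ := hsurj (Function.update 0 j Z)
    have hUj : Φ U j = Z := by rw [hU]; simp
    let t : (Σ i : Fin k, Fin (n i)) → ℕ := fun x => if x = s then 0 else 1
    have hts : t s = 0 := by simp [t]
    have hprod : ∏ x ∈ S j, (t x : 𝔽) = 1 := by
      refine Finset.prod_eq_one fun x hx => ?_
      have hx' : J x = j := by simpa [S] using hx
      have : x ≠ s := by
        rintro rfl
        exact hj hx'.symm
      simp [t, this]
    have e1 := (hpen U j).2 (hcard j) t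
    have e2 := (hpen (U + V * diagE 𝔽 s) j).2 (hcard j) t
    rw [hD, hD1, hprod, mul_one] at e1 e2
    rw [add_mul, mul_assoc V, (hDE t s hts).2, mul_zero, add_zero, e1, map_add, Pi.add_apply,
      hUj] at e2
    exact e2.symm
  · intro s
    by_contra! hc
    have h1 := hJ s (U₀ - U₀ * diagE 𝔽 s) (by
      rw [sub_mul, mul_assoc, diagE_mul_self, sub_self])
    rw [map_sub, Pi.sub_apply, hc U₀, hU₀] at h1
    simp at h1

/-- The element `1 + E_{ab}` in block `i`. -/
def elemT (𝔽 : Type*) [Field 𝔽] {k : ℕ} {n : Fin k → ℕ} (i : Fin k) (a b : Fin (n i)) :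
    BlockAlg 𝔽 k n :=
  Function.update 1 i (Matrix.transvection a b 1)

theorem elemT_isUnit (i : Fin k) (a b : Fin (n i)) (hab : a ≠ b) : IsUnit (elemT 𝔽 i a b) := by
  rw [isUnit_iff_det]
  intro j
  by_cases hj : j = i
  · subst hj
    simp [elemT, Matrix.det_transvection_of_ne _ _ hab]
  · simp [elemT, Function.update_of_ne hj]

/-- Matrix unit `E_{ab}` in block `i`. -/
def matE (𝔽 : Type*) [Field 𝔽] {k : ℕ} {n : Fin k → ℕ} (i : Fin k) (a b : Fin (n i)) :
    BlockAlg 𝔽 k n :=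
  Function.update 0 i (Matrix.single a b 1)

theorem diagE_eq (i : Fin k) (a : Fin (n i)) : diagE 𝔽 ⟨i, a⟩ = matE 𝔽 i a a := by
  funext j
  by_cases hj : j = i
  · subst hj
    ext x y
    simp only [diagE, matE, Function.update_self, Matrix.diagonal_apply, Matrix.single_apply]
    by_cases hx : x = a <;> by_cases hy : x = y <;> simp_all <;> grind
  · simp only [matE, Function.update_of_ne hj, diagE]
    rw [Pi.zero_apply, ← Matrix.diagonal_zero]
    congr 1
    funext x
    rw [if_neg]
    intro h
    exact hj (congrArg Sigma.fst h)

theorem matE_mul (i : Fin k) (a b c : Fin (n i)) :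
    matE 𝔽 i a b * matE 𝔽 i b c = matE 𝔽 i a c := by
  funext j
  by_cases hj : j = i
  · subst hj
    simp [matE]
  · simp [matE, Function.update_of_ne hj]

theorem diagE_mul_elemT (i : Fin k) (a b : Fin (n i)) :
    diagE 𝔽 ⟨i, a⟩ * elemT 𝔽 i a b = matE 𝔽 i a a + matE 𝔽 i a b := by
  rw [diagE_eq]
  funext j
  by_cases hj : j = i
  · subst hj
    simp [matE, elemT, Matrix.transvection, mul_add]
  · simp [matE, elemT, Function.update_of_ne hj]

theorem columns_const [CharZero 𝔽] (Φ : BlockAlg 𝔽 k n →+ BlockAlg 𝔽 k n)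
    (hsurj : Function.Surjective Φ)
    (hsing : ∀ a, ¬ IsUnit a → ¬ IsUnit (Φ a))
    (J : (Σ i : Fin k, Fin (n i)) → Fin k)
    (h1 : ∀ s V j, j ≠ J s → Φ (V * diagE 𝔽 s) j = 0)
    (h2 : ∀ s, ∃ V, Φ (V * diagE 𝔽 s) (J s) ≠ 0)
    (i : Fin k) (a b : Fin (n i)) : J ⟨i, a⟩ = J ⟨i, b⟩ := by
  by_contra hJ
  have hab : a ≠ b := by
    rintro rfl
    exact hJ rfl
  have hT := elemT_isUnit (𝔽 := 𝔽) i a b hab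
  let Ψ : BlockAlg 𝔽 k n →+ BlockAlg 𝔽 k n := Φ.comp (AddMonoidHom.mulRight (elemT 𝔽 i a b))
  have hΨ : ∀ X, Ψ X = Φ (X * elemT 𝔽 i a b) := fun X => rfl
  obtain ⟨J', h3, -⟩ := columns Ψ (by
    intro Z
    obtain ⟨X, rfl⟩ := hsurj Z
    obtain ⟨u, hu⟩ := hT
    refine ⟨X * (u⁻¹ : (BlockAlg 𝔽 k n)ˣ), ?_⟩
    rw [hΨ, ← hu, mul_assoc, Units.inv_mul, mul_one]) (by
    intro X hX
    rw [hΨ]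
    apply hsing
    intro hu
    apply hX
    obtain ⟨u, hu'⟩ := hT
    rw [← hu'] at hu
    exact (Units.isUnit_mul_units X u).mp hu)
  have key : ∀ V j, j ≠ J' ⟨i, a⟩ → Φ (V * matE 𝔽 i a a) j + Φ (V * matE 𝔽 i a b) j = 0 := by
    intro V j hj
    have := h3 ⟨i, a⟩ V j hj
    rwa [hΨ, mul_assoc, diagE_mul_elemT, mul_add, map_add, Pi.add_apply] at this
  have hb : ∀ V j, j ≠ J ⟨i, b⟩ → Φ (V * matE 𝔽 i a b) j = 0 := by
    intro V j hj
    have := h1 ⟨i, b⟩ (V * matE 𝔽 i a b) j hj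
    rwa [mul_assoc, diagE_eq, matE_mul] at this
  by_cases hc : J ⟨i, a⟩ = J' ⟨i, a⟩
  · obtain ⟨V, hV⟩ := h2 ⟨i, b⟩
    apply hV
    have e1 := key (V * matE 𝔽 i b a) (J ⟨i, b⟩) (fun h => hJ (hc.trans h.symm))
    have e2 := h1 ⟨i, a⟩ (V * matE 𝔽 i b a) (J ⟨i, b⟩) (Ne.symm hJ)
    rw [diagE_eq] at e2 ⊢
    rw [e2, zero_add, mul_assoc, matE_mul] at e1
    exact e1
  · obtain ⟨V, hV⟩ := h2 ⟨i, a⟩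
    apply hV
    have e1 := key V _ hc
    rw [hb V _ hJ, add_zero] at e1
    rw [diagE_eq]
    exact e1

end

theorem stmt6 {𝔽 : Type*} [Field 𝔽] [CharZero 𝔽] {k : ℕ} (n : Fin k → ℕ) (hk : 1 ≤ k)
    (hn : ∀ i, 1 ≤ n i)
    (Φ : BlockAlg 𝔽 k n → BlockAlg 𝔽 k n)
    (hadd : ∀ x y, Φ (x + y) = Φ x + Φ y)
    (hsurj : Function.Surjective Φ)
    (hsing : ∀ a, ¬ IsUnit a → ¬ IsUnit (Φ a)) :
    ∀ i : Fin k, ∃ j : Fin k, Φ '' blockSet i = blockSet j := by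
  let Ψ : BlockAlg 𝔽 k n →+ BlockAlg 𝔽 k n := AddMonoidHom.mk' Φ hadd
  have hΨ : ∀ x, Φ x = Ψ x := fun _ => rfl
  obtain ⟨J, h1, h2⟩ := columns Ψ hsurj hsing
  have h3 := columns_const Ψ hsurj hsing J h1 h2
  let K : Fin k → Fin k := fun i => J ⟨i, ⟨0, hn i⟩⟩
  have hK : ∀ s, J s = K s.1 := fun s => h3 s.1 s.2 _
  -- images of blocks are inside blocks
  have hin : ∀ i, ∀ X ∈ blockSet (𝔽 := 𝔽) (n := n) i, ∀ j, j ≠ K i → Φ X j = 0 := by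
    intro i X hX j hj
    have hX1 : X = ∑ s, X * diagE 𝔽 s := by rw [← Finset.mul_sum, sum_diagE, mul_one]
    rw [hX1, hΨ, map_sum, Finset.sum_apply]
    refine Finset.sum_eq_zero fun s _ => ?_
    by_cases hs : s.1 = i
    · apply h1
      rw [hK, hs]
      exact hj
    · have : X * diagE 𝔽 s = 0 := by
        obtain ⟨l, c⟩ := s
        rw [diagE_eq]
        funext m
        by_cases hm : m = l
        · subst hm
          simp [hX m hs]
        · simp [matE, Function.update_of_ne hm]
      rw [this, map_zero]
      rfl
  have hdec : ∀ X : BlockAlg 𝔽 k n, X = ∑ i, Pi.single i (X i) := fun X =>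
    (Finset.univ_sum_single X).symm
  have hmem : ∀ (X : BlockAlg 𝔽 k n) i, Pi.single i (X i) ∈ blockSet (𝔽 := 𝔽) (n := n) i := by
    intro X i j hj
    simp [hj]
  have hsur : Function.Surjective K := by
    intro j
    by_contra! hc
    obtain ⟨X, hX⟩ := hsurj 1
    have e : Φ X j = 0 := by
      rw [hdec X, hΨ, map_sum, Finset.sum_apply]
      exact Finset.sum_eq_zero fun i _ => hin i _ (hmem X i) j (hc i).symm
    rw [hX] at e
    have := congrFun (congrFun e ⟨0, hn j⟩) ⟨0, hn j⟩
    simp at this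
  have hinj : Function.Injective K := Finite.injective_iff_surjective.mpr hsur
  intro i
  refine ⟨K i, Set.Subset.antisymm ?_ ?_⟩
  · rintro _ ⟨X, hX, rfl⟩
    exact fun j hj => hin i X hX j hj
  · intro Z hZ
    obtain ⟨X, rfl⟩ := hsurj Z
    refine ⟨Pi.single i (X i), hmem X i, ?_⟩
    funext j
    by_cases hj : j = K i
    · subst hj
      conv_rhs => rw [hdec X, hΨ, map_sum, Finset.sum_apply]
      rw [Finset.sum_eq_single i]
      · rfl
      · intro l _ hl
        exact hin l _ (hmem X l) _ (fun h => hl (hinj h).symm)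
      · simp
    · rw [hin i _ (hmem X i) j hj, hZ j hj]
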